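/- Recovery formulas for the Schur–Weyl harmonic decomposition: suppose C ∈ Ela equals α(1 ⊗₍₂,₂₎ 1) + β(1 ⊗₍₄₎ 1) + hᵃ ⊗₍₂,₂₎ 1 + hᵇ ⊗₍₄₎ 1 + H with α, β ∈ ℝ, hᵃ, hᵇ ∈ H², H ∈ H⁴. Let C^s_ijkl = (1/3)(C_ijkl + C_ikjl + C_iljk) and C^a = C − C^s. Then α = (1/4) ∑_{i,j} C^a_iijj, β = (1/5) ∑_{i,j} C^s_iijj, hᵃ_kl = 3(∑_i C^a_iikl − (4/3) α δ_kl), hᵇ_kl = (6/7)(∑_i C^s_iikl − (5/3) β δ_kl), and H = C^s − hᵇ ⊗₍₄₎ 1 − β(1 ⊗₍₄₎ 1). -/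

import Mathlib

open scoped BigOperators

/-- Fourth-order tensors on `ℝ³`. -/
abbrev Tens4 : Type := Fin 3 → Fin 3 → Fin 3 → Fin 3 → ℝ

/-- 3×3 real matrices. -/
abbrev Mat3 : Type := Matrix (Fin 3) (Fin 3) ℝ

/-- Kronecker delta on `Fin 3`. -/
noncomputable def kdelta (i j : Fin 3) : ℝ := if i = j then 1 else 0

/-- Minor and major index symmetries of an elasticity tensor. -/
def IsEla (C : Tens4) : Prop :=
  ∀ i j k l, C i j k l = C j i k l ∧ C i j k l = C i j l k ∧ C i j k l = C k l i j

/-- Harmonic second-order tensors: symmetric and trace free. -/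
def IsH2 (h : Mat3) : Prop := h.IsSymm ∧ h.trace = 0

/-- Harmonic fourth-order tensors: totally symmetric and trace free. -/
def IsH4 (H : Tens4) : Prop :=
  (∀ (σ : Equiv.Perm (Fin 4)) (f : Fin 4 → Fin 3),
      H (f (σ 0)) (f (σ 1)) (f (σ 2)) (f (σ 3)) = H (f 0) (f 1) (f 2) (f 3)) ∧
  (∀ k l, ∑ i, H i i k l = 0)

/-- Totally symmetrised tensor product `t₁ ⊗₍₄₎ t₂`. -/
noncomputable def prod4 (t1 t2 : Mat3) (i j k l : Fin 3) : ℝ :=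
  (1/6) * (t1 i j * t2 k l + t2 i j * t1 k l + t1 i k * t2 j l + t1 i l * t2 j k
    + t2 i k * t1 j l + t2 i l * t1 j k)

/-- Tensor product `t₁ ⊗₍₂,₂₎ t₂`. -/
noncomputable def prod22 (t1 t2 : Mat3) (i j k l : Fin 3) : ℝ :=
  (1/3) * (t1 i j * t2 k l + t2 i j * t1 k l
    - (1/2) * (t1 i k * t2 j l + t1 i l * t2 j k + t2 i k * t1 j l + t2 i l * t1 j k))

/-- The Schur–Weyl combination of `(α, β, hᵃ, hᵇ, H)`. -/
noncomputable def SW (α β : ℝ) (ha hb : Mat3) (H : Tens4) (i j k l : Fin 3) : ℝ :=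
  α * prod22 1 1 i j k l + β * prod4 1 1 i j k l + prod22 ha 1 i j k l
    + prod4 hb 1 i j k l + H i j k l

/-- The totally symmetric part `C^s` of an elasticity tensor. -/
noncomputable def Csym (C : Tens4) (i j k l : Fin 3) : ℝ :=
  (1/3) * (C i j k l + C i k j l + C i l j k)

/-- The asymmetric part `C^a = C - C^s`. -/
noncomputable def Casym (C : Tens4) (i j k l : Fin 3) : ℝ :=
  C i j k l - Csym C i j k l

/-!
The symmetrization `C ↦ C^s` is linear, annihilates `s ⊗₍₂,₂₎ t` and fixes both `s ⊗₍₄₎ t` (for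
symmetric `s`, `t`) and every totally symmetric tensor. Hence
`C^s = β (1 ⊗₍₄₎ 1) + hᵇ ⊗₍₄₎ 1 + H` and `C^a = α (1 ⊗₍₂,₂₎ 1) + hᵃ ⊗₍₂,₂₎ 1`. For symmetric `s`,
contracting the first two indices sends `s ⊗₍₂,₂₎ 1` to `(tr s • 1 + s) / 3` and `s ⊗₍₄₎ 1` to
`(tr s • 1 + 7 s) / 6`; with `s = 1` and with `s` trace free this gives the constants
`4/3`, `1/3`, `5/3`, `7/6`, and one more trace isolates `α` and `β`.
-/

/-- The contraction `C ↦ (∑ i, C i i k l)` of the first two indices, as a linear map. -/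
def trace12 : Tens4 →ₗ[ℝ] Mat3 where
  toFun C := Matrix.of fun k l => ∑ i, C i i k l
  map_add' C D := by
    ext k l
    simp [Finset.sum_add_distrib]
  map_smul' c C := by
    ext k l
    simp [Finset.mul_sum]

/-- Invariance of a fourth-order tensor under every permutation of its indices. -/
def IsTotallySymm (T : Tens4) : Prop :=
  ∀ (σ : Equiv.Perm (Fin 4)) (f : Fin 4 → Fin 3),
    T (f (σ 0)) (f (σ 1)) (f (σ 2)) (f (σ 3)) = T (f 0) (f 1) (f 2) (f 3)

theorem trace12_apply (C : Tens4) (k l : Fin 3) : trace12 C k l = ∑ i, C i i k l := rfl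

theorem trace_trace12 (C : Tens4) : (trace12 C).trace = ∑ i, ∑ j, C i i j j := by
  rw [Finset.sum_comm]
  rfl

theorem kdelta_eq_one_apply (k l : Fin 3) : kdelta k l = (1 : Mat3) k l :=
  Matrix.one_apply.symm

theorem Csym_add (C D : Tens4) : Csym (C + D) = Csym C + Csym D := by
  ext i j k l
  simp only [Csym, Pi.add_apply]
  ring

theorem Csym_smul (c : ℝ) (C : Tens4) : Csym (c • C) = c • Csym C := by
  ext i j k l
  simp only [Csym, Pi.smul_apply, smul_eq_mul]
  ring

theorem Casym_eq_sub (C : Tens4) : Casym C = C - Csym C := rfl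

theorem IsTotallySymm.swap_middle {T : Tens4} (hT : IsTotallySymm T) (i j k l : Fin 3) :
    T i k j l = T i j k l :=
  hT (Equiv.swap 1 2) ![i, j, k, l]

theorem IsTotallySymm.swap_last {T : Tens4} (hT : IsTotallySymm T) (i j k l : Fin 3) :
    T i j l k = T i j k l :=
  hT (Equiv.swap 2 3) ![i, j, k, l]

theorem IsTotallySymm.Csym_eq {T : Tens4} (hT : IsTotallySymm T) : Csym T = T := by
  ext i j k l
  rw [Csym, hT.swap_middle i j k l, hT.swap_middle i j l k, hT.swap_last i j k l]
  ring

section Products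

open scoped Matrix

variable {s t : Mat3}

theorem Csym_prod22 (hs : s.IsSymm) (ht : t.IsSymm) : Csym (prod22 s t) = 0 := by
  ext i j k l
  simp only [Csym, prod22, hs.apply j k, hs.apply j l, hs.apply k l,
    ht.apply j k, ht.apply j l, ht.apply k l, Pi.zero_apply]
  ring

theorem Csym_prod4 (hs : s.IsSymm) (ht : t.IsSymm) : Csym (prod4 s t) = prod4 s t := by
  ext i j k l
  simp only [Csym, prod4, hs.apply j k, hs.apply j l, hs.apply k l,
    ht.apply j k, ht.apply j l, ht.apply k l]
  ring

theorem trace12_prod22 (s t : Mat3) : trace12 (prod22 s t) =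
    (1 / 3 : ℝ) • (s.trace • t + t.trace • s - (sᵀ * t + tᵀ * s)) := by
  ext k l
  simp only [trace12_apply, prod22, Matrix.smul_apply, Matrix.sub_apply, Matrix.add_apply,
    Matrix.mul_apply, Matrix.transpose_apply, Matrix.trace_fin_three, Fin.sum_univ_three,
    smul_eq_mul]
  ring

theorem trace12_prod4 (s t : Mat3) : trace12 (prod4 s t) =
    (1 / 6 : ℝ) • (s.trace • t + t.trace • s + (2 : ℝ) • (sᵀ * t + tᵀ * s)) := by
  ext k l
  simp only [trace12_apply, prod4, Matrix.smul_apply, Matrix.add_apply,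
    Matrix.mul_apply, Matrix.transpose_apply, Matrix.trace_fin_three, Fin.sum_univ_three,
    smul_eq_mul]
  ring

theorem trace12_prod22_one (hs : s.IsSymm) :
    trace12 (prod22 s 1) = (1 / 3 : ℝ) • (s.trace • (1 : Mat3) + s) := by
  rw [trace12_prod22, hs.eq, Matrix.transpose_one, mul_one, one_mul, Matrix.trace_one,
    Fintype.card_fin]
  module

theorem trace12_prod4_one (hs : s.IsSymm) :
    trace12 (prod4 s 1) = (1 / 6 : ℝ) • (s.trace • (1 : Mat3) + (7 : ℝ) • s) := by
  rw [trace12_prod4, hs.eq, Matrix.transpose_one, mul_one, one_mul, Matrix.trace_one,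
    Fintype.card_fin]
  module

end Products

section SchurWeyl

variable {ha hb : Mat3} {H : Tens4} (α β : ℝ)

theorem SW_eq (ha hb : Mat3) (H : Tens4) : SW α β ha hb H =
    α • prod22 1 1 + β • prod4 1 1 + prod22 ha 1 + prod4 hb 1 + H := rfl

theorem Csym_SW (hha : ha.IsSymm) (hhb : hb.IsSymm) (hH : IsTotallySymm H) :
    Csym (SW α β ha hb H) = β • prod4 1 1 + prod4 hb 1 + H := by
  have h1 : (1 : Mat3).IsSymm := Matrix.isSymm_one
  simp only [SW_eq, Csym_add, Csym_smul, Csym_prod22 h1 h1, Csym_prod4 h1 h1,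
    Csym_prod22 hha h1, Csym_prod4 hhb h1, hH.Csym_eq, smul_zero, zero_add, add_zero]

theorem Casym_SW (hha : ha.IsSymm) (hhb : hb.IsSymm) (hH : IsTotallySymm H) :
    Casym (SW α β ha hb H) = α • prod22 1 1 + prod22 ha 1 := by
  rw [Casym_eq_sub, Csym_SW α β hha hhb hH, SW_eq]
  abel

theorem trace12_Csym_SW (hha : ha.IsSymm) (hhb : IsH2 hb) (hH : IsH4 H) :
    trace12 (Csym (SW α β ha hb H)) = (5 / 3 * β) • (1 : Mat3) + (7 / 6 : ℝ) • hb := by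
  have hH_trace : trace12 H = 0 := Matrix.ext hH.2
  rw [Csym_SW α β hha hhb.1 hH.1, map_add, map_add, map_smul, hH_trace,
    trace12_prod4_one Matrix.isSymm_one, trace12_prod4_one hhb.1, hhb.2, Matrix.trace_one,
    Fintype.card_fin]
  module

theorem trace12_Casym_SW (hha : IsH2 ha) (hhb : hb.IsSymm) (hH : IsTotallySymm H) :
    trace12 (Casym (SW α β ha hb H)) = (4 / 3 * α) • (1 : Mat3) + (1 / 3 : ℝ) • ha := by
  rw [Casym_SW α β hha.1 hhb hH, map_add, map_smul, trace12_prod22_one Matrix.isSymm_one,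
    trace12_prod22_one hha.1, hha.2, Matrix.trace_one, Fintype.card_fin]
  module

end SchurWeyl

theorem IsH2.trace_smul_one_add_smul {h : Mat3} (hh : IsH2 h) (c d : ℝ) :
    (c • (1 : Mat3) + d • h).trace = 3 * c := by
  rw [Matrix.trace_add, Matrix.trace_smul, Matrix.trace_smul, hh.2, Matrix.trace_one,
    Fintype.card_fin, smul_eq_mul, smul_zero]
  push_cast
  ring

/-- Recovery formulas for the Schur–Weyl harmonic decomposition. -/
theorem sw_recovery (C : Tens4) (hC : IsEla C) (α β : ℝ) (ha hb : Mat3) (H : Tens4)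
    (hha : IsH2 ha) (hhb : IsH2 hb) (hH : IsH4 H)
    (hdec : ∀ i j k l, C i j k l = SW α β ha hb H i j k l) :
    α = (1/4) * ∑ i, ∑ j, Casym C i i j j ∧
    β = (1/5) * ∑ i, ∑ j, Csym C i i j j ∧
    (∀ k l, ha k l = 3 * ((∑ i, Casym C i i k l) - (4/3) * α * kdelta k l)) ∧
    (∀ k l, hb k l = (6/7) * ((∑ i, Csym C i i k l) - (5/3) * β * kdelta k l)) ∧
    (∀ i j k l, H i j k l = Csym C i j k l - prod4 hb 1 i j k l - β * prod4 1 1 i j k l) := by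
  obtain rfl : C = SW α β ha hb H := by
    ext i j k l
    exact hdec i j k l
  have trace_asym := trace12_Casym_SW α β hha hhb.1 hH.1
  have trace_sym := trace12_Csym_SW α β hha.1 hhb hH
  refine ⟨?_, ?_, fun k l => ?_, fun k l => ?_, fun i j k l => ?_⟩
  · rw [← trace_trace12, trace_asym, hha.trace_smul_one_add_smul]
    ring
  · rw [← trace_trace12, trace_sym, hhb.trace_smul_one_add_smul]
    ring
  · rw [← trace12_apply, trace_asym, kdelta_eq_one_apply, Matrix.add_apply, Matrix.smul_apply,
      Matrix.smul_apply, smul_eq_mul, smul_eq_mul]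
    ring
  · rw [← trace12_apply, trace_sym, kdelta_eq_one_apply, Matrix.add_apply, Matrix.smul_apply,
      Matrix.smul_apply, smul_eq_mul, smul_eq_mul]
    ring
  · rw [Csym_SW α β hha.1 hhb.1 hH.1]
    simp only [Pi.add_apply, Pi.smul_apply, smul_eq_mul]
    ring
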